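/- Let K be a field of characteristic 0 and let A = K[x_1,…,x_8]/((x_1^2, x_1x_2, x_1x_3, x_1x_4, x_1x_5) + (x_2,x_3,x_4,x_5)^3). Then A is a Cohen-Macaulay standard graded K-algebra of Krull dimension 3 with h-polynomial h_A(t) = 1 + 5t + 10t^2, the sequence Θ = x_6, x_7, x_8 is a linear system of parameters for A, and for every integer r ≥ 3 the algebra A_Θ^⟨r⟩ does not have the weak Lefschetz property. -/

import Mathlib

open MvPolynomial

set_option synthInstance.maxHeartbeats 1000000
set_option maxHeartbeats 1000000

/-- The ideal `(x₁², x₁x₂, x₁x₃, x₁x₄, x₁x₅) + (x₂,x₃,x₄,x₅)³` of `K[x₁,…,x₈]`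
(variables indexed by `Fin 8`, `x_i` corresponding to the index `i-1`). -/
noncomputable def KMIdeal (K : Type*) [Field K] : Ideal (MvPolynomial (Fin 8) K) :=
  Ideal.span {X 0 * X 0, X 0 * X 1, X 0 * X 2, X 0 * X 3, X 0 * X 4} +
    (Ideal.span {(X 1 : MvPolynomial (Fin 8) K), X 2, X 3, X 4}) ^ 3

/-- The algebra `A = K[x₁,…,x₈]/((x₁²,x₁x₂,x₁x₃,x₁x₄,x₁x₅) + (x₂,x₃,x₄,x₅)³)` of
Remark 2.4 of Kubitzke–Murai. -/
abbrev KMAlgebra (K : Type*) [Field K] : Type _ :=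
  MvPolynomial (Fin 8) K ⧸ KMIdeal K

/-- The standard grading of `KMAlgebra K`: the degree-`i` component is the image of the
homogeneous polynomials of degree `i` under the quotient map. -/
noncomputable def KMGrading (K : Type*) [Field K] : ℕ → Submodule K (KMAlgebra K) :=
  fun i => Submodule.map (Ideal.Quotient.mkₐ K (KMIdeal K)).toLinearMap
    (homogeneousSubmodule (Fin 8) K i)

/-- The sequence `Θ = x₆, x₇, x₈` in `KMAlgebra K`. -/
noncomputable def KMTheta (K : Type*) [Field K] : Fin 3 → KMAlgebra K :=
  ![Ideal.Quotient.mk (KMIdeal K) (X 5), Ideal.Quotient.mk (KMIdeal K) (X 6),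
    Ideal.Quotient.mk (KMIdeal K) (X 7)]

/-- The degree-`i` component of the ideal `(θ₁^r, θ₂^r, θ₃^r) A^⟨r⟩` of the `r`-th Veronese
subalgebra `A^⟨r⟩ = ⊕_i A_{ir}` of `A = KMAlgebra K`, viewed as a `K`-submodule of `A`.
The degree-`i` component of `A_Θ^⟨r⟩` is then `KMGrading K (i*r) ⧸ KMLsopIdealComponent K r i`. -/
noncomputable def KMLsopIdealComponent (K : Type*) [Field K] (r : ℕ) :
    ℕ → Submodule K (KMAlgebra K)
  | 0 => ⊥
  | (i + 1) => ⨆ j : Fin 3,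
      Submodule.map (LinearMap.mulLeft K (KMTheta K j ^ r)) (KMGrading K (i * r))


open MvPolynomial
set_option maxHeartbeats 1000000

def KMBad (m : Fin 8 →₀ ℕ) : Prop :=
  (1 ≤ m 0 ∧ 2 ≤ m 0 + m 1 + m 2 + m 3 + m 4) ∨ 3 ≤ m 1 + m 2 + m 3 + m 4

lemma KMBad_mono {m n : Fin 8 →₀ ℕ} (h : m ≤ n) (hm : KMBad m) : KMBad n := by
  unfold KMBad at *
  have := fun i => h i
  have h0 := this 0
  have h1 := this 1
  have h2 := this 2
  have h3 := this 3
  have h4 := this 4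
  omega

lemma KM_X_mul_eq {K : Type*} [Field K] (a b : Fin 8) : (X a * X b : MvPolynomial (Fin 8) K) =
    monomial (Finsupp.single a 1 + Finsupp.single b 1) 1 := by
  simp [X, monomial_mul]

/-- the monomial ideal describing `I` plus some of the variables -/
def KMBadS (S : Set (Fin 8)) : Set (Fin 8 →₀ ℕ) := {m | KMBad m ∨ ∃ s ∈ S, 1 ≤ m s}

lemma KM_mem_span_badS {K : Type*} [Field K] (S : Set (Fin 8)) (f : MvPolynomial (Fin 8) K) :
    f ∈ Ideal.span ((fun s => monomial s (1 : K)) '' KMBadS S) ↔ ∀ m ∈ f.support, m ∈ KMBadS S := by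
  rw [mem_ideal_span_monomial_image]
  refine forall₂_congr fun m _ => ⟨?_, fun h => ⟨m, h, le_rfl⟩⟩
  rintro ⟨n, hn | ⟨s, hs, hn⟩, hnm⟩
  · exact Or.inl (KMBad_mono hnm hn)
  · exact Or.inr ⟨s, hs, hn.trans (hnm s)⟩

lemma KM_ideal_le {K : Type*} [Field K] (S : Set (Fin 8)) :
    KMIdeal K ≤ Ideal.span ((fun s => monomial s (1 : K)) '' KMBadS S) := by
  unfold KMIdeal
  rw [Submodule.add_eq_sup, sup_le_iff]
  constructor
  · rw [Ideal.span_le]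
    rintro f hf
    apply Ideal.subset_span
    simp only [Set.mem_insert_iff, Set.mem_singleton_iff] at hf
    rcases hf with rfl | rfl | rfl | rfl | rfl <;>
    · rw [KM_X_mul_eq]
      refine ⟨_, ?_, rfl⟩
      left; left
      simp [Finsupp.single_apply]
  · rw [pow_three, Ideal.span_mul_span', Ideal.span_mul_span', Ideal.span_le]
    rintro f hf
    apply Ideal.subset_span
    obtain ⟨a, ha, bc, ⟨b, hb, c, hc, rfl⟩, rfl⟩ := hf
    have key : ∀ a ∈ ({X 1, X 2, X 3, X 4} : Set (MvPolynomial (Fin 8) K)),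
        ∃ i : Fin 8, a = X i ∧ (i = 1 ∨ i = 2 ∨ i = 3 ∨ i = 4) := by
      rintro a (rfl | rfl | rfl | rfl)
      exacts [⟨1, by simp⟩, ⟨2, by simp⟩, ⟨3, by simp⟩, ⟨4, by simp⟩]
    obtain ⟨i, rfl, hi⟩ := key a ha
    obtain ⟨j, rfl, hj⟩ := key b hb
    obtain ⟨k, rfl, hk⟩ := key c hc
    refine ⟨Finsupp.single i 1 + (Finsupp.single j 1 + Finsupp.single k 1), ?_, ?_⟩
    · left; right
      rcases hi with rfl | rfl | rfl | rfl <;> rcases hj with rfl | rfl | rfl | rfl <;>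
      rcases hk with rfl | rfl | rfl | rfl <;> simp [Finsupp.single_apply]
    · simp [X, monomial_mul]

lemma KM_monomial_factor {K : Type*} [Field K] (m : Fin 8 →₀ ℕ) (c : K) : monomial m c =
    C c * (X 0 ^ m 0 * X 1 ^ m 1 * X 2 ^ m 2 * X 3 ^ m 3 * X 4 ^ m 4 * X 5 ^ m 5 * X 6 ^ m 6
      * X 7 ^ m 7) := by
  rw [monomial_eq, Finsupp.prod_fintype _ _ (by simp), Fin.prod_univ_eight]

lemma KM_monomial_mem {K : Type*} [Field K] {m : Fin 8 →₀ ℕ} (h : KMBad m) (c : K) :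
    monomial m c ∈ KMIdeal K := by
  unfold KMIdeal
  rw [Submodule.add_eq_sup]
  rcases h with ⟨h0, h1⟩ | h
  · apply Ideal.mem_sup_left
    have key : ∀ i : Fin 8, Finsupp.single 0 1 + Finsupp.single i 1 ≤ m →
      (X 0 * X i : MvPolynomial (Fin 8) K) ∣ monomial m c := by
      intro i hi
      rw [KM_X_mul_eq]
      obtain ⟨d, rfl⟩ := exists_add_of_le hi
      exact ⟨monomial d c, by simp [monomial_mul]⟩
    have : ∃ i : Fin 8, (i = 0 ∨ i = 1 ∨ i = 2 ∨ i = 3 ∨ i = 4) ∧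
        Finsupp.single 0 1 + Finsupp.single i 1 ≤ m := by
      have : 2 ≤ m 0 ∨ 1 ≤ m 1 ∨ 1 ≤ m 2 ∨ 1 ≤ m 3 ∨ 1 ≤ m 4 := by omega
      rcases this with h | h | h | h | h
      · refine ⟨0, by simp, fun j => ?_⟩
        by_cases hj : j = 0
        · subst hj; simp; omega
        · simp [Finsupp.single_apply, Ne.symm hj]
      all_goals
        first
        | refine ⟨1, by simp, fun j => ?_⟩
          by_cases hj : j = 1
          · subst hj; simpa [Finsupp.single_apply] using h
          · by_cases hj' : j = 0
            · subst hj'; simpa [Finsupp.single_apply] using h0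
            · simp [Finsupp.single_apply, Ne.symm hj, Ne.symm hj']; done
        | refine ⟨2, by simp, fun j => ?_⟩
          by_cases hj : j = 2
          · subst hj; simpa [Finsupp.single_apply] using h
          · by_cases hj' : j = 0
            · subst hj'; simpa [Finsupp.single_apply] using h0
            · simp [Finsupp.single_apply, Ne.symm hj, Ne.symm hj']; done
        | refine ⟨3, by simp, fun j => ?_⟩
          by_cases hj : j = 3
          · subst hj; simpa [Finsupp.single_apply] using h
          · by_cases hj' : j = 0
            · subst hj'; simpa [Finsupp.single_apply] using h0
            · simp [Finsupp.single_apply, Ne.symm hj, Ne.symm hj']; done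
        | refine ⟨4, by simp, fun j => ?_⟩
          by_cases hj : j = 4
          · subst hj; simpa [Finsupp.single_apply] using h
          · by_cases hj' : j = 0
            · subst hj'; simpa [Finsupp.single_apply] using h0
            · simp [Finsupp.single_apply, Ne.symm hj, Ne.symm hj']; done
    obtain ⟨i, hi, hle⟩ := this
    refine Ideal.mem_of_dvd _ (key i hle) (Ideal.subset_span ?_)
    rcases hi with rfl | rfl | rfl | rfl | rfl <;> simp
  · apply Ideal.mem_sup_right
    refine Ideal.pow_le_pow_right h ?_
    rw [KM_monomial_factor]
    set J := Ideal.span {(X 1 : MvPolynomial (Fin 8) K), X 2, X 3, X 4} with hJ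
    have h1 : (X 1 : MvPolynomial (Fin 8) K) ^ m 1 ∈ J ^ m 1 :=
      Ideal.pow_mem_pow (Ideal.subset_span (by simp)) _
    have h2 : (X 2 : MvPolynomial (Fin 8) K) ^ m 2 ∈ J ^ m 2 :=
      Ideal.pow_mem_pow (Ideal.subset_span (by simp)) _
    have h3 : (X 3 : MvPolynomial (Fin 8) K) ^ m 3 ∈ J ^ m 3 :=
      Ideal.pow_mem_pow (Ideal.subset_span (by simp)) _
    have h4 : (X 4 : MvPolynomial (Fin 8) K) ^ m 4 ∈ J ^ m 4 :=
      Ideal.pow_mem_pow (Ideal.subset_span (by simp)) _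
    have := Ideal.mul_mem_mul (Ideal.mul_mem_mul (Ideal.mul_mem_mul h1 h2) h3) h4
    rw [← pow_add, ← pow_add, ← pow_add] at this
    refine Ideal.mem_of_dvd _ ?_ this
    exact ⟨C c * (X 0 ^ m 0 * X 5 ^ m 5 * X 6 ^ m 6 * X 7 ^ m 7), by ring⟩

lemma KM_mem_sup {K : Type*} [Field K] (S : Set (Fin 8)) (f : MvPolynomial (Fin 8) K) :
    f ∈ KMIdeal K ⊔ Ideal.span (X '' S) ↔ ∀ m ∈ f.support, KMBad m ∨ ∃ s ∈ S, 1 ≤ m s := by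
  constructor
  · intro h
    refine (KM_mem_span_badS S f).1 (sup_le (KM_ideal_le S) ?_ h)
    rw [Ideal.span_le]
    rintro _ ⟨s, hs, rfl⟩
    exact Ideal.subset_span ⟨Finsupp.single s 1, Or.inr ⟨s, hs, by simp⟩, rfl⟩
  · intro h
    rw [f.as_sum]
    refine Ideal.sum_mem _ fun m hm => ?_
    rcases h m hm with h | ⟨s, hs, h⟩
    · exact Ideal.mem_sup_left (KM_monomial_mem h _)
    · refine Ideal.mem_sup_right (Ideal.mem_of_dvd _ ?_ (Ideal.subset_span ⟨s, hs, rfl⟩))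
      obtain ⟨d, hd⟩ := exists_add_of_le (Finsupp.single_le_iff.2 h)
      rw [hd]
      exact ⟨monomial d (coeff (Finsupp.single s 1 + d) f), by simp [X, monomial_mul]⟩

lemma KM_mem_ideal {K : Type*} [Field K] (f : MvPolynomial (Fin 8) K) :
    f ∈ KMIdeal K ↔ ∀ m ∈ f.support, KMBad m := by
  simpa using KM_mem_sup ∅ f


open MvPolynomial
set_option maxHeartbeats 1000000

instance KMBad_dec : DecidablePred KMBad := fun m => by unfold KMBad; infer_instance

def KMG (i : ℕ) : Finset (Fin 8 →₀ ℕ) :=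
  ((Finset.univ : Finset (Fin 8)).finsuppAntidiag i).filter (fun m => ¬ KMBad m)

lemma KM_mem_G {i : ℕ} {m : Fin 8 →₀ ℕ} : m ∈ KMG i ↔
    m 0 + m 1 + m 2 + m 3 + m 4 + m 5 + m 6 + m 7 = i ∧ ¬ KMBad m := by
  simp [KMG, Finset.mem_finsuppAntidiag, Fin.sum_univ_eight]

lemma KM_degree (m : Fin 8 →₀ ℕ) :
    m.degree = m 0 + m 1 + m 2 + m 3 + m 4 + m 5 + m 6 + m 7 := by
  rw [Finsupp.degree_eq_sum, Fin.sum_univ_eight]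

def KMB : Finset (ℕ × ℕ × ℕ × ℕ × ℕ) :=
  ((Finset.range 3 ×ˢ Finset.range 3 ×ˢ Finset.range 3 ×ˢ Finset.range 3 ×ˢ Finset.range 3)).filter
    (fun b => ¬ ((1 ≤ b.1 ∧ 2 ≤ b.1 + b.2.1 + b.2.2.1 + b.2.2.2.1 + b.2.2.2.2) ∨
      3 ≤ b.2.1 + b.2.2.1 + b.2.2.2.1 + b.2.2.2.2))

def KMdeg (b : ℕ × ℕ × ℕ × ℕ × ℕ) : ℕ := b.1 + b.2.1 + b.2.2.1 + b.2.2.2.1 + b.2.2.2.2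

def KMT (i d : ℕ) : ℕ := if d ≤ i then (i - d + 2).choose 2 else 0

lemma KM_fiber (i : ℕ) (b : ℕ × ℕ × ℕ × ℕ × ℕ) (hb : b ∈ KMB) :
    ((KMG i).filter (fun m => (m 0, m 1, m 2, m 3, m 4) = b)).card = KMT i (KMdeg b) := by
  obtain ⟨b0, b1, b2, b3, b4⟩ := b
  simp only [KMB, Finset.mem_filter, Finset.mem_product, Finset.mem_range] at hb
  unfold KMT KMdeg
  dsimp only
  split_ifs with h
  · have := Finset.card_finsuppAntidiag_nat_eq_choose (s := (Finset.univ : Finset (Fin 3)))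
      (i - (b0 + b1 + b2 + b3 + b4))
    have h2 : (i - (b0 + b1 + b2 + b3 + b4) + 2).choose 2 = 
      (Finset.finsuppAntidiag (Finset.univ : Finset (Fin 3)) (i - (b0 + b1 + b2 + b3 + b4))).card := by
      rw [this]; simp only [Finset.card_univ, Fintype.card_fin]
      rw [← Nat.choose_symm_of_eq_add]
      · congr 1; omega
      · omega
    rw [h2]
    refine Finset.card_nbij' (fun m => Finsupp.equivFunOnFinite.symm ![m 5, m 6, m 7])
      (fun n => Finsupp.equivFunOnFinite.symm ![b0, b1, b2, b3, b4, n 0, n 1, n 2]) ?_ ?_ ?_ ?_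
    · intro m hm
      simp [KM_mem_G] at hm
      simp [Finset.mem_finsuppAntidiag, Fin.sum_univ_three]
      omega
    · intro n hn
      simp [Finset.mem_finsuppAntidiag, Fin.sum_univ_three] at hn
      simp [KM_mem_G, KMBad]
      simp at hb
      omega
    · intro m hm
      simp [KM_mem_G] at hm
      obtain ⟨_, rfl, rfl, rfl, rfl, rfl⟩ := hm
      ext j
      fin_cases j <;> simp
    · intro n hn
      ext j
      fin_cases j <;> simp
  · rw [Finset.card_eq_zero, Finset.filter_eq_empty_iff]
    intro m hm h'
    simp [KM_mem_G] at hm h'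
    omega

lemma KM_card (i : ℕ) : (KMG i).card = KMT i 0 + 5 * KMT i 1 + 10 * KMT i 2 := by
  rw [Finset.card_eq_sum_card_fiberwise (f := fun m => (m 0, m 1, m 2, m 3, m 4)) (t := KMB)]
  · rw [Finset.sum_congr rfl (KM_fiber i)]
    rw [← Finset.sum_fiberwise_of_maps_to (s := KMB) (t := Finset.range 3) (g := KMdeg)]
    · have h : ∀ d, ∑ b ∈ KMB with KMdeg b = d, KMT i (KMdeg b) = 
        (KMB.filter (fun b => KMdeg b = d)).card * KMT i d := by
        intro d
        rw [← smul_eq_mul, ← Finset.sum_const]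
        refine Finset.sum_congr rfl fun b hb => ?_
        rw [(Finset.mem_filter.1 hb).2]
      simp only [h, Finset.sum_range_succ, Finset.sum_range_zero]
      rw [show (KMB.filter (fun b => KMdeg b = 0)).card = 1 by decide +kernel,
        show (KMB.filter (fun b => KMdeg b = 1)).card = 5 by decide +kernel,
        show (KMB.filter (fun b => KMdeg b = 2)).card = 10 by decide +kernel]
      ring
    · intro b hb
      simp only [KMB, Finset.mem_filter, Finset.mem_product, Finset.mem_range] at hb
      simp only [Finset.mem_range, KMdeg]
      omega
  · intro m hm
    simp [KM_mem_G, KMBad] at hm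
    simp [KMB]
    omega

lemma KM_span (K : Type*) [Field K] (i : ℕ) : KMGrading K i = Submodule.span K (Set.range (fun m : KMG i => 
      Ideal.Quotient.mkₐ K (KMIdeal K) (monomial m.1 (1 : K)))) := by
    apply le_antisymm
    · rintro _ ⟨f, hf, rfl⟩
      rw [f.as_sum, map_sum]
      refine Submodule.sum_mem _ fun m hm => ?_
      by_cases hb : KMBad m
      · have : Ideal.Quotient.mkₐ K (KMIdeal K) (monomial m (coeff m f)) = 0 :=
          Ideal.Quotient.eq_zero_iff_mem.2 (KM_monomial_mem hb _)
        simp only [AlgHom.toLinearMap_apply, this]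
        exact Submodule.zero_mem _
      · have : (monomial m (coeff m f) : MvPolynomial (Fin 8) K) = coeff m f • monomial m 1 := by
          simp [smul_monomial]
        rw [this, map_smul]
        refine Submodule.smul_mem _ _ (Submodule.subset_span ⟨⟨m, KM_mem_G.2 ⟨?_, hb⟩⟩, rfl⟩)
        rw [← KM_degree]
        have := hf (mem_support_iff.1 hm)
        rwa [Finsupp.degree_eq_weight_one]
    · rw [Submodule.span_le]
      rintro _ ⟨m, rfl⟩
      refine ⟨monomial m.1 1, ?_, rfl⟩
      refine isHomogeneous_monomial _ ?_
      rw [KM_degree]; exact (KM_mem_G.1 m.2).1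

lemma KM_finrank (K : Type*) [Field K] (i : ℕ) :
    Module.finrank K (KMGrading K i) = (KMG i).card := by
  have hli : LinearIndependent K (fun m : KMG i => Ideal.Quotient.mkₐ K (KMIdeal K) 
      (monomial m.1 (1 : K))) := by
    rw [Fintype.linearIndependent_iff]
    intro g hg m
    have h1 : (∑ m : KMG i, monomial m.1 (g m)) ∈ KMIdeal K := by
      rw [← Ideal.Quotient.eq_zero_iff_mem, ← hg, map_sum]
      refine Finset.sum_congr rfl fun m _ => ?_
      rw [← map_smul, smul_monomial, smul_eq_mul, mul_one]; rfl
    rw [KM_mem_ideal] at h1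
    by_contra hne
    refine (KM_mem_G.1 m.2).2 (h1 m.1 ?_)
    rw [mem_support_iff, coeff_sum]
    simpa [coeff_monomial, Subtype.coe_inj] using hne
  rw [KM_span, finrank_span_eq_card hli, Fintype.card_coe]

instance KM_fin (K : Type*) [Field K] (i : ℕ) : Module.Finite K (KMGrading K i) := by
  rw [KM_span]
  exact FiniteDimensional.span_of_finite K (Set.finite_range _)

lemma KM_spanP (K : Type*) [Field K] (i : ℕ) :
    homogeneousSubmodule (Fin 3) K i = Submodule.span K (Set.range
      (fun m : (Finset.univ : Finset (Fin 3)).finsuppAntidiag i => monomial m.1 (1 : K))) := by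
  apply le_antisymm
  · intro f hf
    rw [f.as_sum]
    refine Submodule.sum_mem _ fun m hm => ?_
    have : (monomial m (coeff m f) : MvPolynomial (Fin 3) K) = coeff m f • monomial m 1 := by
      simp [smul_monomial]
    rw [this]
    refine Submodule.smul_mem _ _ (Submodule.subset_span ⟨⟨m, ?_⟩, rfl⟩)
    have : m.degree = i := by
      rw [Finsupp.degree_eq_weight_one]; exact hf (mem_support_iff.1 hm)
    rw [Finsupp.degree_eq_sum] at this
    simpa [Finset.mem_finsuppAntidiag] using this
  · rw [Submodule.span_le]
    rintro _ ⟨m, rfl⟩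
    refine isHomogeneous_monomial _ ?_
    have := (Finset.mem_finsuppAntidiag.1 m.2).1
    rwa [Finsupp.degree_eq_sum]

lemma KM_finrankP (K : Type*) [Field K] (i : ℕ) :
    Module.finrank K (homogeneousSubmodule (Fin 3) K i) = (i + 2).choose 2 := by
  have hli : LinearIndependent K
      (fun m : (Finset.univ : Finset (Fin 3)).finsuppAntidiag i => monomial m.1 (1 : K)) :=
    (basisMonomials (Fin 3) K).linearIndependent.comp _ Subtype.val_injective
  rw [KM_spanP, finrank_span_eq_card hli, Fintype.card_coe,
    Finset.card_finsuppAntidiag_nat_eq_choose]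
  simp only [Finset.card_univ, Fintype.card_fin]
  rw [show 3 + i - 1 = i + 2 by omega]
  exact Nat.choose_symm_of_eq_add rfl

instance KM_finP (K : Type*) [Field K] (i : ℕ) :
    Module.Finite K (homogeneousSubmodule (Fin 3) K i) := by
  rw [KM_spanP]
  exact FiniteDimensional.span_of_finite K (Set.finite_range _)

lemma KM_hilb (K : Type*) [Field K] :
    ((1 + 5 * Polynomial.X + 10 * Polynomial.X ^ 2 : Polynomial ℤ) : PowerSeries ℤ) =
      (PowerSeries.mk fun i => (Module.finrank K (KMGrading K i) : ℤ)) *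
        (1 - PowerSeries.X) ^ 3 := by
  have h1 : (PowerSeries.mk fun i => (Module.finrank K (KMGrading K i) : ℤ)) = 
      (1 + 5 * PowerSeries.X + 10 * PowerSeries.X ^ 2) * 
        PowerSeries.mk (fun n => ((2 + n).choose 2 : ℤ)) := by
    ext i
    rw [PowerSeries.coeff_mk, KM_finrank, KM_card]
    rw [add_mul, add_mul, one_mul, map_add, map_add, mul_assoc, mul_assoc]
    have e5 : (5 : PowerSeries ℤ) = PowerSeries.C 5 := by simp
    have e10 : (10 : PowerSeries ℤ) = PowerSeries.C 10 := by simp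
    rw [e5, e10, PowerSeries.coeff_C_mul, PowerSeries.coeff_C_mul, PowerSeries.coeff_X_pow_mul', 
      PowerSeries.coeff_mk]
    conv_rhs => rw [← pow_one (PowerSeries.X : PowerSeries ℤ), PowerSeries.coeff_X_pow_mul']
    simp only [PowerSeries.coeff_mk, KMT]
    push_cast
    simp [add_comm]
  have h2 : PowerSeries.mk (fun n => ((2 + n).choose 2 : ℤ)) * (1 - PowerSeries.X) ^ 3 = 1 := by
    rw [← PowerSeries.invOneSubPow_val_succ_eq_mk_add_choose ℤ 2,
      ← PowerSeries.invOneSubPow_inv_eq_one_sub_pow]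
    exact (PowerSeries.invOneSubPow ℤ 3).val_inv
  rw [h1, mul_assoc, h2]
  have e5 : ((5 : Polynomial ℤ) : PowerSeries ℤ) = 5 :=
    map_ofNat (Polynomial.coeToPowerSeries.ringHom (R := ℤ)) 5
  have e10 : ((10 : Polynomial ℤ) : PowerSeries ℤ) = 10 :=
    map_ofNat (Polynomial.coeToPowerSeries.ringHom (R := ℤ)) 10
  simp [e5, e10]


open MvPolynomial
set_option maxHeartbeats 1000000

noncomputable def KMpi (K : Type*) [Field K] : MvPolynomial (Fin 8) K →ₐ[K] MvPolynomial (Fin 3) K :=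
  aeval ![0, 0, 0, 0, 0, X 0, X 1, X 2]

noncomputable def KMio (K : Type*) [Field K] : MvPolynomial (Fin 3) K →ₐ[K] MvPolynomial (Fin 8) K :=
  aeval ![X 5, X 6, X 7]

lemma KM_pi_io {K : Type*} [Field K] (f : MvPolynomial (Fin 3) K) : KMpi K (KMio K f) = f := by
  have : (KMpi K).comp (KMio K) = AlgHom.id K _ := by
    ext i
    fin_cases i <;> simp [KMpi, KMio]
  exact DFunLike.congr_fun this f

lemma KM_pi_surj {K : Type*} [Field K] : Function.Surjective (KMpi K) :=
  fun f => ⟨_, KM_pi_io f⟩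

lemma KM_sub_mem {K : Type*} [Field K] (J : Ideal (MvPolynomial (Fin 8) K))
    (f : MvPolynomial (Fin 8) K) (a : MvPolynomial (Fin 8) K)
    (h : ∀ i : Fin 8, i.val < 5 → a * X i ∈ J) : a * (f - KMio K (KMpi K f)) ∈ J := by
  induction f using MvPolynomial.induction_on with
  | C c => simp [algHom_C]
  | add p q hp hq =>
    have := J.add_mem hp hq
    simp only [map_add]
    convert this using 1; ring
  | mul_X p i hp =>
    by_cases hi : i.val < 5
    · have : KMpi K (X i) = 0 := by
        fin_cases i <;> simp [KMpi] at hi ⊢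
      rw [map_mul, this]
      simp only [mul_zero, map_zero, sub_zero]
      have := J.mul_mem_left p (h i hi)
      convert this using 1; ring
    · have : KMio K (KMpi K (X i)) = X i := by
        fin_cases i <;> simp [KMpi, KMio] at hi ⊢
      rw [map_mul, map_mul, this]
      have := J.mul_mem_right (X i) hp
      convert this using 1; ring

lemma KM_X0_mem {K : Type*} [Field K] (i : Fin 8) (hi : i.val < 5) :
    (X 0 * X i : MvPolynomial (Fin 8) K) ∈ KMIdeal K := by
  refine Ideal.mem_sup_left (Ideal.subset_span ?_)
  fin_cases i <;> simp at hi ⊢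

lemma KM_X_pow {K : Type*} [Field K] (i : Fin 8) (hi : i.val < 5) :
    (X i ^ 3 : MvPolynomial (Fin 8) K) ∈ KMIdeal K := by
  rw [X_pow_eq_monomial]
  apply KM_monomial_mem
  unfold KMBad
  fin_cases i <;> simp at hi ⊢

lemma KM_le_ker {K : Type*} [Field K] {S : Type*} [CommRing S] 
    (g : MvPolynomial (Fin 8) K →+* S) (h0 : g (X 0) * g (X 0) = 0) 
    (h1 : g (X 1) = 0) (h2 : g (X 2) = 0) (h3 : g (X 3) = 0) (h4 : g (X 4) = 0) :
    KMIdeal K ≤ RingHom.ker g := by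
  unfold KMIdeal
  rw [Submodule.add_eq_sup, sup_le_iff]
  constructor
  · rw [Ideal.span_le]
    rintro f (rfl | rfl | rfl | rfl | rfl) <;> simp [*]
  · refine (Ideal.pow_le_self (by norm_num)).trans ?_
    rw [Ideal.span_le]
    rintro f (rfl | rfl | rfl | rfl) <;> simp [*]

lemma KM_dim (K : Type*) [Field K] : ringKrullDim (KMAlgebra K) = 3 := by
  have h1 : ringKrullDim (MvPolynomial (Fin 3) K) = 3 := by
    rw [MvPolynomial.ringKrullDim_of_isNoetherianRing, ringKrullDim_eq_zero_of_field]
    simp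
  have h2 : ringKrullDim (MvPolynomial (Fin 8) K ⧸ RingHom.ker (KMpi K)) = 3 := by
    rw [← h1]
    exact ringKrullDim_eq_of_ringEquiv (RingHom.quotientKerEquivOfSurjective KM_pi_surj)
  rw [← h2, ringKrullDim_quotient, ringKrullDim_quotient]
  congr! 2
  all_goals
    ext p
    simp only [PrimeSpectrum.mem_zeroLocus, SetLike.coe_subset_coe]
    constructor
    · intro h f hf
      have := KM_sub_mem p.asIdeal f 1 (fun i hi => by
        rw [one_mul]; exact p.2.mem_of_pow_mem 3 (h (KM_X_pow i hi)))
      rw [show KMpi K f = 0 from hf] at this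
      simpa using this
    · intro h
      refine le_trans (KM_le_ker (KMpi K).toRingHom ?_ ?_ ?_ ?_ ?_) h <;> simp [KMpi]

lemma KM_theta_mem (K : Type*) [Field K] (j) : KMTheta K j ∈ KMGrading K 1 := by
  fin_cases j
  exacts [⟨X 5, isHomogeneous_X _ _, rfl⟩, ⟨X 6, isHomogeneous_X _ _, rfl⟩,
    ⟨X 7, isHomogeneous_X _ _, rfl⟩]

lemma KM_gen_fin {K : Type*} [Field K] {S : Type*} [CommRing S] [Algebra K S]
    (q : MvPolynomial (Fin 8) K →ₐ[K] S) (hq : Function.Surjective q)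
    (h : ∀ i, q (X i) ^ 3 = 0) : Module.Finite K S := by
  have hIntegral : Algebra.IsIntegral K S := by
    constructor
    intro x
    obtain ⟨f, rfl⟩ := hq x
    induction f using MvPolynomial.induction_on with
    | C c =>
      rw [show C c = algebraMap K (MvPolynomial (Fin 8) K) c from rfl, AlgHom.commutes]
      exact isIntegral_algebraMap
    | add p q' hp hq => rw [map_add]; exact hp.add hq
    | mul_X p i hp =>
      rw [map_mul]
      refine hp.mul ?_
      refine IsIntegral.of_pow (n := 3) (by norm_num) ?_
      rw [h]; exact isIntegral_zero
  have : Algebra.FiniteType K S := Algebra.FiniteType.of_surjective q hq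
  exact Algebra.IsIntegral.finite

lemma KM_gen_fin' {K : Type*} [Field K] {A : Type*} [CommRing A] [Algebra K A]
    (p : MvPolynomial (Fin 8) K →ₐ[K] A) (hp : Function.Surjective p) (J : Ideal A)
    (h : ∀ i, p (X i) ^ 3 ∈ J) : Module.Finite K (A ⧸ J) := by
  refine KM_gen_fin ((Ideal.Quotient.mkₐ K J).comp p)
    ((Ideal.Quotient.mkₐ_surjective K J).comp hp) fun i => ?_
  rw [← map_pow]
  refine Ideal.Quotient.eq_zero_iff_mem.2 ?_
  simpa using h i

lemma KM_theta_fin (K : Type*) [Field K] :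
    Module.Finite K (KMAlgebra K ⧸ Ideal.span (Set.range (KMTheta K))) := by
  refine KM_gen_fin' (Ideal.Quotient.mkₐ K (KMIdeal K)) (Ideal.Quotient.mkₐ_surjective K _) _
    fun i => ?_
  by_cases hi : i.val < 5
  · rw [← map_pow]
    have : Ideal.Quotient.mkₐ K (KMIdeal K) (X i ^ 3) = 0 :=
      Ideal.Quotient.eq_zero_iff_mem.2 (KM_X_pow i hi)
    rw [this]; exact Ideal.zero_mem _
  · refine Ideal.pow_mem_of_mem _ ?_ _ (by norm_num)
    refine Ideal.subset_span ?_
    fin_cases i <;> simp at hi ⊢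
    exacts [⟨0, rfl⟩, ⟨1, rfl⟩, ⟨2, rfl⟩]

/-- kills everything except `x₀` and the `y`s -/
noncomputable def KMpsi (K : Type*) [Field K] :
    MvPolynomial (Fin 8) K →ₐ[K] DualNumber (MvPolynomial (Fin 3) K) :=
  aeval ![DualNumber.eps, 0, 0, 0, 0, TrivSqZeroExt.inl (X 0), TrivSqZeroExt.inl (X 1),
    TrivSqZeroExt.inl (X 2)]

lemma KM_psi_ideal {K : Type*} [Field K] {f : MvPolynomial (Fin 8) K} (hf : f ∈ KMIdeal K) :
    KMpsi K f = 0 := by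
  refine (KM_le_ker (KMpsi K).toRingHom ?_ ?_ ?_ ?_ ?_ hf) <;> simp [KMpsi]

lemma KM_psi_io {K : Type*} [Field K] (f : MvPolynomial (Fin 3) K) :
    KMpsi K (KMio K f) = TrivSqZeroExt.inl f := by
  have : (KMpsi K).comp (KMio K) = TrivSqZeroExt.inlAlgHom K _ _ := by
    ext i
    all_goals fin_cases i <;> simp [KMpsi, KMio]
  exact DFunLike.congr_fun this f

lemma KM_psi_X0 {K : Type*} [Field K] (f : MvPolynomial (Fin 3) K) :
    TrivSqZeroExt.snd (KMpsi K (X 0 * KMio K f)) = f := by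
  rw [map_mul, KM_psi_io]
  simp [KMpsi]


open MvPolynomial
set_option maxHeartbeats 1000000

lemma KM_iSup3 {K V : Type*} [Field K] [AddCommGroup V] [Module K V] (f : Fin 3 → Submodule K V) :
    (⨆ j, f j) = f 0 ⊔ f 1 ⊔ f 2 := by
  apply le_antisymm
  · refine iSup_le fun j => ?_
    fin_cases j
    · exact le_sup_left.trans le_sup_left
    · exact le_sup_right.trans le_sup_left
    · exact le_sup_right
  · exact sup_le (sup_le (le_iSup f 0) (le_iSup f 1)) (le_iSup f 2)

lemma KM_finrank_sup {K V : Type*} [Field K] [AddCommGroup V] [Module K V] (M : Submodule K V)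
    [Module.Finite K M] (g : Fin 4 → V →ₗ[K] V) :
    Module.finrank K ↥(M.map (g 0) ⊔ (M.map (g 1) ⊔ M.map (g 2) ⊔ M.map (g 3)) : Submodule K V) ≤
      4 * Module.finrank K M ∧
    Module.Finite K ↥(M.map (g 0) ⊔ (M.map (g 1) ⊔ M.map (g 2) ⊔ M.map (g 3)) : Submodule K V) := by
  have h := fun i => Submodule.finrank_map_le (g i) M
  have h0 := h 0
  have h1 := h 1
  have h2 := h 2
  have h3 := h 3
  have a1 := Submodule.finrank_add_le_finrank_add_finrank (M.map (g 1)) (M.map (g 2))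
  have a2 := Submodule.finrank_add_le_finrank_add_finrank (M.map (g 1) ⊔ M.map (g 2)) (M.map (g 3))
  have a3 := Submodule.finrank_add_le_finrank_add_finrank (M.map (g 0))
    (M.map (g 1) ⊔ M.map (g 2) ⊔ M.map (g 3))
  exact ⟨by omega, inferInstance⟩

lemma KM_choose2 (n : ℕ) : 2 * (n + 2).choose 2 = (n + 2) * (n + 1) := by
  rw [Nat.choose_two_right, Nat.mul_div_cancel' ?_]
  · rfl
  · exact (Nat.even_mul_pred_self (n + 2)).two_dvd

lemma KM_card' (n : ℕ) (hn : 2 ≤ n) : (KMG n).card + n = 8 * n ^ 2 + 1 := by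
  obtain ⟨k, rfl⟩ := Nat.exists_eq_add_of_le' hn
  rw [KM_card]
  simp only [KMT, show 0 ≤ k + 2 by omega, show 1 ≤ k + 2 by omega, show 2 ≤ k + 2 by omega,
    if_true]
  have h0 := KM_choose2 k
  have h1 := KM_choose2 (k + 1)
  have h2 := KM_choose2 (k + 2)
  simp only [Nat.sub_zero, show k + 2 - 1 = k + 1 by omega, show k + 2 - 2 = k by omega]
  nlinarith

lemma KM_not_surj (K : Type*) [Field K] (r : ℕ) (hr : 3 ≤ r) (w : KMAlgebra K) :
    ¬ (∀ y ∈ KMGrading K ((1 + 1) * r), ∃ x ∈ KMGrading K (1 * r),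
          y - w * x ∈ KMLsopIdealComponent K r (1 + 1)) := by
  intro h
  have hle : KMGrading K ((1 + 1) * r) ≤ (KMGrading K (1 * r)).map (LinearMap.mulLeft K w) ⊔
      ((KMGrading K (1 * r)).map (LinearMap.mulLeft K (KMTheta K 0 ^ r)) ⊔
      (KMGrading K (1 * r)).map (LinearMap.mulLeft K (KMTheta K 1 ^ r)) ⊔
      (KMGrading K (1 * r)).map (LinearMap.mulLeft K (KMTheta K 2 ^ r))) := by
    intro y hy
    obtain ⟨x, hx, hxy⟩ := h y hy
    rw [KMLsopIdealComponent, KM_iSup3] at hxy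
    rw [← add_sub_cancel (w * x) y]
    exact Submodule.add_mem_sup ⟨x, hx, rfl⟩ hxy
  obtain ⟨h1, h2⟩ := KM_finrank_sup (KMGrading K (1 * r)) ![LinearMap.mulLeft K w,
    LinearMap.mulLeft K (KMTheta K 0 ^ r), LinearMap.mulLeft K (KMTheta K 1 ^ r),
    LinearMap.mulLeft K (KMTheta K 2 ^ r)]
  have h3 := (@Submodule.finrank_mono K _ _ _ _ _ _ _ h2 hle).trans h1
  rw [KM_finrank, KM_finrank] at h3
  have c1 := KM_card' (1 * r) (by omega)
  have c2 := KM_card' ((1 + 1) * r) (by omega)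
  nlinarith

lemma KM_pi_homog {K : Type*} [Field K] {n : ℕ} {W : MvPolynomial (Fin 8) K}
    (h : W.IsHomogeneous n) : (KMpi K W).IsHomogeneous n := by
  have h1 : ∀ i : Fin 8, ((![0, 0, 0, 0, 0, X 0, X 1, X 2] :
      Fin 8 → MvPolynomial (Fin 3) K) i).IsHomogeneous 1 := by
    intro i
    fin_cases i
    all_goals first | exact isHomogeneous_zero _ K _ | exact isHomogeneous_X K _
  have := IsHomogeneous.aeval h _ h1
  simpa [KMpi] using this

lemma KM_io_homog {K : Type*} [Field K] {n : ℕ} {W : MvPolynomial (Fin 3) K}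
    (h : W.IsHomogeneous n) : (KMio K W).IsHomogeneous n := by
  have h1 : ∀ i : Fin 3, ((![X 5, X 6, X 7] :
      Fin 3 → MvPolynomial (Fin 8) K) i).IsHomogeneous 1 := by
    intro i
    fin_cases i <;> exact isHomogeneous_X K _
  have := IsHomogeneous.aeval h _ h1
  simpa [KMio] using this

lemma KM_io_X {K : Type*} [Field K] (j : Fin 3) :
    Ideal.Quotient.mk (KMIdeal K) (KMio K (X j)) = KMTheta K j := by
  fin_cases j <;> simp [KMio, KMTheta]

lemma KM_syz {K : Type*} [Field K] {r : ℕ} (hr : 1 ≤ r) (g : Fin 3 → MvPolynomial (Fin 3) K)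
    (hg : ∀ j, (g j).IsHomogeneous (r - 1)) (h : ∑ j, X j ^ r * g j = 0) (j : Fin 3) : g j = 0 := by
  ext m
  by_contra hne
  rw [coeff_zero] at hne
  have hd : m.degree = r - 1 := by
    rw [Finsupp.degree_eq_weight_one]; exact hg j hne
  have := congrArg (coeff (Finsupp.single j r + m)) h
  rw [coeff_sum, Finset.sum_eq_single j] at this
  · rw [X_pow_eq_monomial, coeff_monomial_mul, one_mul, coeff_zero] at this
    exact hne this
  · intro k _ hk
    rw [X_pow_eq_monomial, coeff_monomial_mul', if_neg]
    intro hle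
    have h1 := Finsupp.single_le_iff.1 hle
    rw [Finsupp.add_apply, Finsupp.single_eq_of_ne hk] at h1
    have h2 := Finsupp.le_degree k m
    omega
  · simp

lemma KM_exists {K : Type*} [Field K] {r : ℕ} (hr : 1 ≤ r) (W : MvPolynomial (Fin 3) K)
    (hW : W.IsHomogeneous r) : ∃ (f : MvPolynomial (Fin 3) K) (g : Fin 3 → MvPolynomial (Fin 3) K),
      f.IsHomogeneous (r - 1) ∧ (∀ j, (g j).IsHomogeneous (r - 1)) ∧ f ≠ 0 ∧
      W * f + ∑ j, X j ^ r * g j = 0 := by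
  let H := homogeneousSubmodule (Fin 3) K (r - 1)
  let Φ0 : (H × (Fin 3 → H)) →ₗ[K] MvPolynomial (Fin 3) K :=
    LinearMap.coprod ((LinearMap.mulLeft K W).comp H.subtype)
      (∑ j : Fin 3, ((LinearMap.mulLeft K (X j ^ r)).comp H.subtype).comp (LinearMap.proj j))
  have hΦ : ∀ p, Φ0 p = W * p.1 + ∑ j, X j ^ r * (p.2 j : MvPolynomial (Fin 3) K) := by
    intro p; simp [Φ0]
  let Φ : (H × (Fin 3 → H)) →ₗ[K] homogeneousSubmodule (Fin 3) K (2 * r - 1) :=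
    LinearMap.codRestrict _ Φ0 (by
      intro p
      rw [hΦ]
      refine Submodule.add_mem _ ?_ (Submodule.sum_mem _ fun j _ => ?_)
      · have := hW.mul (show IsHomogeneous (p.1 : MvPolynomial (Fin 3) K) (r - 1) from p.1.2)
        rwa [show r + (r - 1) = 2 * r - 1 by omega] at this
      · have := ((isHomogeneous_X K j).pow r).mul
          (show IsHomogeneous (p.2 j : MvPolynomial (Fin 3) K) (r - 1) from (p.2 j).2)
        rwa [show 1 * r + (r - 1) = 2 * r - 1 by omega] at this)
  have hker : LinearMap.ker Φ ≠ ⊥ := by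
    apply LinearMap.ker_ne_bot_of_finrank_lt
    rw [Module.finrank_prod, Module.finrank_pi_fintype, KM_finrankP]
    simp only [H, KM_finrankP, Finset.sum_const, Finset.card_univ, Fintype.card_fin, smul_eq_mul]
    have h1 := KM_choose2 (r - 1)
    have h2 := KM_choose2 (2 * r - 1)
    obtain ⟨k, rfl⟩ := Nat.exists_eq_add_of_le' hr
    simp only [show k + 1 - 1 = k by omega, show 2 * (k + 1) - 1 = 2 * k + 1 by omega] at h1 h2 ⊢
    nlinarith
  obtain ⟨p, hp, hp0⟩ := Submodule.exists_mem_ne_zero_of_ne_bot hker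
  have hp' : W * p.1 + ∑ j, X j ^ r * (p.2 j : MvPolynomial (Fin 3) K) = 0 := by
    rw [← hΦ]; exact congrArg Subtype.val (LinearMap.mem_ker.1 hp)
  refine ⟨p.1, fun j => p.2 j, p.1.2, fun j => (p.2 j).2, ?_, hp'⟩
  intro h0
  rw [h0, mul_zero, zero_add] at hp'
  apply hp0
  have := KM_syz hr (fun j => (p.2 j : MvPolynomial (Fin 3) K)) (fun j => (p.2 j).2) hp'
  refine Prod.ext (Subtype.ext h0) (funext fun j => Subtype.ext (this j))

lemma KM_not_inj (K : Type*) [Field K] (r : ℕ) (hr : 3 ≤ r) (w : KMAlgebra K)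
    (hw : w ∈ KMGrading K r) :
    ¬ (∀ x ∈ KMGrading K (1 * r),
          w * x ∈ KMLsopIdealComponent K r (1 + 1) → x ∈ KMLsopIdealComponent K r 1) := by
  intro h
  obtain ⟨W, hW, rfl⟩ := hw
  obtain ⟨f, g, hf, hg, hf0, heq⟩ := KM_exists (by omega) (KMpi K W) (KM_pi_homog hW)
  have hX : ∀ f : MvPolynomial (Fin 3) K, f.IsHomogeneous (r - 1) →
      Ideal.Quotient.mk (KMIdeal K) (X 0 * KMio K f) ∈ KMGrading K (1 * r) := by
    intro f hf
    refine ⟨X 0 * KMio K f, ?_, rfl⟩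
    have := (isHomogeneous_X K (0 : Fin 8)).mul (KM_io_homog hf)
    rwa [show 1 + (r - 1) = 1 * r by omega] at this
  have h1 := h _ (hX f hf) ?_
  · apply hf0
    rw [← KM_psi_X0 f]
    have key : ∀ x ∈ KMLsopIdealComponent K r 1, ∃ F, Ideal.Quotient.mk (KMIdeal K) F = x ∧
        TrivSqZeroExt.snd (KMpsi K F) = 0 := by
      intro x hx
      let N : Submodule K (KMAlgebra K) := Submodule.map
        (Ideal.Quotient.mkₐ K (KMIdeal K)).toLinearMap
        (LinearMap.ker ((TrivSqZeroExt.sndHom (MvPolynomial (Fin 3) K)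
          (MvPolynomial (Fin 3) K)).restrictScalars K ∘ₗ (KMpsi K).toLinearMap))
      have : KMLsopIdealComponent K r 1 ≤ N := by
        rw [KMLsopIdealComponent]
        refine iSup_le fun j => ?_
        rintro _ ⟨_, ⟨F, hF, rfl⟩, rfl⟩
        rw [zero_mul, homogeneousSubmodule_zero] at hF
        obtain ⟨c, rfl⟩ := Submodule.mem_one.1 hF
        refine ⟨KMio K (X j ^ r * C c), ?_, ?_⟩
        · simp only [SetLike.mem_coe, LinearMap.mem_ker, LinearMap.comp_apply,
            AlgHom.toLinearMap_apply, KM_psi_io]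
          simp
        · simp only [AlgHom.toLinearMap_apply, Ideal.Quotient.mkₐ_eq_mk, map_mul, map_pow,
            KM_io_X, LinearMap.mulLeft_apply]
          congr 2
          simp [KMio]
      obtain ⟨F, hF, hFx⟩ := this hx
      exact ⟨F, hFx, hF⟩
    obtain ⟨F, hFx, hF⟩ := key _ h1
    have h2 := KM_psi_ideal (Ideal.Quotient.eq.1 hFx)
    rw [map_sub, sub_eq_zero] at h2
    rw [← h2, hF]
  · have e1 : Ideal.Quotient.mk (KMIdeal K) (X 0 * W) =
        Ideal.Quotient.mk (KMIdeal K) (X 0 * KMio K (KMpi K W)) := by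
      rw [Ideal.Quotient.eq, ← mul_sub]
      exact KM_sub_mem _ _ _ KM_X0_mem
    have e2 : Ideal.Quotient.mk (KMIdeal K) W * Ideal.Quotient.mk (KMIdeal K) (X 0 * KMio K f) =
        ∑ j, - (KMTheta K j ^ r * Ideal.Quotient.mk (KMIdeal K) (X 0 * KMio K (g j))) := by
      calc _ = Ideal.Quotient.mk (KMIdeal K) (X 0 * W) * Ideal.Quotient.mk (KMIdeal K) (KMio K f) := by
            rw [← map_mul, ← map_mul]; congr 1; ring
        _ = Ideal.Quotient.mk (KMIdeal K) (X 0 * KMio K (KMpi K W * f)) := by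
            rw [e1, ← map_mul, map_mul (KMio K), mul_assoc]
        _ = _ := by
            rw [eq_neg_of_add_eq_zero_left heq]
            simp only [← KM_io_X, Finset.sum_neg_distrib, map_neg, map_sum, mul_neg, map_mul,
              map_pow, Finset.mul_sum]
            congr 1
            refine Finset.sum_congr rfl fun j _ => by ring
    change Ideal.Quotient.mk (KMIdeal K) W * _ ∈ _
    rw [e2, KMLsopIdealComponent]
    refine Submodule.sum_mem _ fun j _ => Submodule.neg_mem _ ?_
    exact Submodule.mem_iSup_of_mem j ⟨_, hX _ (hg j), rfl⟩


open MvPolynomial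
set_option maxHeartbeats 1000000

lemma KM_reg_step {K : Type*} [Field K] (S : Set (Fin 8)) (k : Fin 8) (hk : 5 ≤ k.val) (hkS : k ∉ S)
    (f : MvPolynomial (Fin 8) K) (h : X k * f ∈ KMIdeal K ⊔ Ideal.span (X '' S)) :
    f ∈ KMIdeal K ⊔ Ideal.span (X '' S) := by
  rw [KM_mem_sup] at *
  intro m hm
  have h1 := h (Finsupp.single k 1 + m) (by
    rw [mem_support_iff, coeff_X_mul]; exact mem_support_iff.1 hm)
  rcases h1 with h1 | ⟨s, hs, h1⟩
  · left
    have : ∀ i : Fin 8, i.val < 5 → (Finsupp.single k 1 + m : Fin 8 →₀ ℕ) i = m i := by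
      intro i hi
      rw [Finsupp.add_apply, Finsupp.single_eq_of_ne, zero_add]
      rintro rfl; omega
    simpa only [KMBad, this 0 (by decide), this 1 (by decide), this 2 (by decide),
      this 3 (by decide), this 4 (by decide)] using h1
  · right
    refine ⟨s, hs, ?_⟩
    rwa [Finsupp.add_apply, Finsupp.single_eq_of_ne, zero_add] at h1
    rintro rfl; exact hkS hs

lemma KM_reg_quot {K : Type*} [Field K] (S : Set (Fin 8)) (k : Fin 8) (hk : 5 ≤ k.val) (hkS : k ∉ S)
    (J : Ideal (KMAlgebra K)) (hJ : J = Ideal.span (Ideal.Quotient.mk (KMIdeal K) '' (X '' S)))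
    (a : KMAlgebra K) (h : Ideal.Quotient.mk (KMIdeal K) (X k) * a ∈ J) : a ∈ J := by
  obtain ⟨f, rfl⟩ := Ideal.Quotient.mk_surjective a
  subst hJ
  rw [← Ideal.map_span] at *
  rw [← map_mul] at h
  rw [Ideal.mem_quotient_iff_mem_sup] at *
  rw [sup_comm] at *
  exact KM_reg_step S k hk hkS f h

lemma KM_weak_crit {A : Type*} [CommRing A] (θ : Fin 3 → A)
    (h0 : ∀ a, θ 0 * a = 0 → a = 0)
    (h1 : ∀ a, θ 1 * a ∈ Ideal.span {θ 0} → a ∈ Ideal.span {θ 0})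
    (h2 : ∀ a, θ 2 * a ∈ Ideal.span {θ 0, θ 1} → a ∈ Ideal.span {θ 0, θ 1})
    (h3 : Ideal.span {θ 0, θ 1, θ 2} ≠ ⊤) :
    RingTheory.Sequence.IsRegular A (List.ofFn θ) := by
  have hl : List.ofFn θ = [θ 0, θ 1, θ 2] := by simp [List.ofFn_succ]
  have key : ∀ (J : Ideal A) (c : A), (∀ a, c * a ∈ J → a ∈ J) →
      IsSMulRegular (A ⧸ (J • ⊤ : Submodule A A)) c := by
    intro J c h
    rw [isSMulRegular_iff_right_eq_zero_of_smul]
    intro x hx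
    obtain ⟨a, rfl⟩ := Submodule.mkQ_surjective _ x
    rw [← map_smul, Submodule.mkQ_apply, Submodule.Quotient.mk_eq_zero] at hx
    rw [Submodule.mkQ_apply, Submodule.Quotient.mk_eq_zero]
    simp only [smul_eq_mul, Ideal.mul_top] at hx ⊢
    exact h a hx
  rw [hl, RingTheory.Sequence.isRegular_iff, RingTheory.Sequence.isWeaklyRegular_iff_Fin]
  constructor
  · intro i
    apply key
    fin_cases i
    · simpa using h0
    · simpa [Ideal.ofList] using h1
    · simpa [Ideal.ofList, Set.insert_def] using h2
  · intro h
    apply h3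
    simp only [smul_eq_mul, Ideal.mul_top] at h
    rw [h]
    simp [Ideal.ofList, Set.insert_def]

lemma KM_theta_reg (K : Type*) [Field K] :
    RingTheory.Sequence.IsRegular (KMAlgebra K) (List.ofFn (KMTheta K)) := by
  apply KM_weak_crit
  · intro a ha
    have := KM_reg_quot ∅ 5 (by decide) (by simp) ⊥ (by simp) a (by
      rw [Ideal.mem_bot]; exact ha)
    simpa using this
  · exact fun a ha => KM_reg_quot {5} 6 (by decide) (by simp) _ (by simp [KMTheta]) a ha
  · exact fun a ha => KM_reg_quot {5, 6} 7 (by decide) (by simp) _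
      (by simp [KMTheta, Set.image_insert_eq]) a ha
  · rw [show ({KMTheta K 0, KMTheta K 1, KMTheta K 2} : Set (KMAlgebra K)) =
      Ideal.Quotient.mk (KMIdeal K) '' (X '' {5, 6, 7}) by simp [KMTheta, Set.image_insert_eq],
      Ne, Ideal.eq_top_iff_one, ← Ideal.map_span, ← map_one (Ideal.Quotient.mk (KMIdeal K)),
      Ideal.mem_quotient_iff_mem_sup, sup_comm, KM_mem_sup]
    intro h
    have := h 0 (by simp)
    simp [KMBad] at this

/-- the substitution `x_i ↦ x_i`, `y_j ↦ T_j` -/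
noncomputable def KMsub {K : Type*} [Field K] (T : Fin 3 → MvPolynomial (Fin 8) K) :
    MvPolynomial (Fin 8) K →ₐ[K] MvPolynomial (Fin 8) K :=
  aeval ![X 0, X 1, X 2, X 3, X 4, T 0, T 1, T 2]

lemma KM_sub_le {K : Type*} [Field K] (T : Fin 3 → MvPolynomial (Fin 8) K) :
    KMIdeal K ≤ (KMIdeal K).comap (KMsub T) := by
  rw [← Ideal.map_le_iff_le_comap]
  conv_lhs => rw [KMIdeal]
  rw [Submodule.add_eq_sup, Ideal.map_sup, Ideal.map_pow, Ideal.map_span, Ideal.map_span]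
  simp [Set.image_insert_eq, KMsub]
  exact ⟨le_sup_left, le_sup_right⟩

lemma KM_surj_inj {A : Type*} [CommRing A] [IsNoetherianRing A] (φ : A →+* A)
    (h : Function.Surjective φ) : Function.Injective φ := by
  have hmono : ∀ n, RingHom.ker (φ ^ n) ≤ RingHom.ker (φ ^ (n + 1)) := by
    intro n x hx
    rw [RingHom.mem_ker] at *
    rw [pow_succ', RingHom.mul_def, RingHom.comp_apply, hx, map_zero]
  obtain ⟨n, hn⟩ := monotone_stabilizes_iff_noetherian.2 (inferInstance : IsNoetherian A A)
    ⟨fun n => RingHom.ker (φ ^ n), monotone_nat_of_le_succ hmono⟩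
  have hsurj : Function.Surjective (φ ^ n : A →+* A) := by
    rw [RingHom.coe_pow]; exact h.iterate n
  rw [injective_iff_map_eq_zero]
  intro a ha
  obtain ⟨b, rfl⟩ := hsurj a
  have h1 : b ∈ RingHom.ker (φ ^ (n + 1)) := by
    rw [RingHom.mem_ker, pow_succ', RingHom.mul_def, RingHom.comp_apply, ha]
  have h2 : RingHom.ker (φ ^ n) = RingHom.ker (φ ^ (n + 1)) := hn (n + 1) (Nat.le_succ n)
  rw [← h2] at h1
  exact h1

lemma KM_not_fin {K : Type*} [Field K] {A : Type*} [CommRing A] [Algebra K A] (J : Ideal A)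
    (p : A →ₐ[K] Polynomial K) (hp : Function.Surjective p) (h : ∀ a ∈ J, p a = 0)
    (hfin : Module.Finite K (A ⧸ J)) : False := by
  let q : (A ⧸ J) →ₐ[K] Polynomial K := Ideal.Quotient.liftₐ J p h
  have hq : Function.Surjective q := fun y => by
    obtain ⟨x, rfl⟩ := hp y
    exact ⟨Ideal.Quotient.mk J x, rfl⟩
  exact Polynomial.not_finite (R := K) (Module.Finite.of_surjective q.toLinearMap hq)

lemma KM_det {K : Type*} [Field K] (a : Fin 3 → Fin 8 → K)
    (hfin : Module.Finite K (KMAlgebra K ⧸ Ideal.span (Set.range fun j =>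
      Ideal.Quotient.mk (KMIdeal K) (∑ i, a j i • X i)))) :
    (Matrix.of fun j k : Fin 3 => a j (Fin.natAdd 5 k)).det ≠ 0 := by
  intro hdet
  obtain ⟨v, hv0, hv⟩ := Matrix.exists_mulVec_eq_zero_iff.2 hdet
  let q : MvPolynomial (Fin 8) K →ₐ[K] Polynomial K :=
    aeval ![0, 0, 0, 0, 0, v 0 • Polynomial.X, v 1 • Polynomial.X, v 2 • Polynomial.X]
  have hqI : ∀ f ∈ KMIdeal K, q f = 0 := fun f hf =>
    KM_le_ker q.toRingHom (by simp [q]) (by simp [q]) (by simp [q]) (by simp [q]) (by simp [q]) hf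
  refine KM_not_fin _ (Ideal.Quotient.liftₐ (KMIdeal K) q hqI) ?_ ?_ hfin
  · have hX : ∃ f, q f = Polynomial.X := by
      obtain ⟨k, hk⟩ := Function.ne_iff.1 hv0
      refine ⟨(v k)⁻¹ • X (Fin.natAdd 5 k), ?_⟩
      have : q (X (Fin.natAdd 5 k)) = v k • Polynomial.X := by
        fin_cases k <;> simp [q]
      rw [map_smul, this, smul_smul, inv_mul_cancel₀ hk, one_smul]
    obtain ⟨f, hf⟩ := hX
    intro y
    refine ⟨Ideal.Quotient.mk _ (Polynomial.aeval f y), ?_⟩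
    change q _ = y
    rw [← Polynomial.aeval_algHom_apply, hf, Polynomial.aeval_X_left_apply]
  · intro x hx
    rw [← RingHom.mem_ker]
    revert x
    change Ideal.span _ ≤ _
    rw [Ideal.span_le]
    rintro _ ⟨j, rfl⟩
    simp only [SetLike.mem_coe, RingHom.mem_ker]
    change q _ = 0
    have := congrFun hv j
    simp [Matrix.mulVec, dotProduct, Fin.sum_univ_three] at this
    simp [q, Fin.sum_univ_eight, smul_smul]
    rw [← add_smul, ← add_smul]
    convert zero_smul K _

lemma KM_sub_surj {K : Type*} [Field K] (a : Fin 3 → Fin 8 → K)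
    (hdet : (Matrix.of fun j k : Fin 3 => a j (Fin.natAdd 5 k)).det ≠ 0) :
    Function.Surjective
      (KMsub (fun j => ∑ i, a j i • X i : Fin 3 → MvPolynomial (Fin 8) K)) := by
  rw [← AlgHom.range_eq_top, eq_top_iff, ← MvPolynomial.adjoin_range_X, Algebra.adjoin_le_iff]
  set R := (KMsub (fun j => ∑ i, a j i • X i : Fin 3 → MvPolynomial (Fin 8) K)).range with hR
  have hlow : ∀ i : Fin 5, X (Fin.castAdd 3 i) ∈ R := by
    intro i
    refine ⟨X (Fin.castAdd 3 i), ?_⟩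
    fin_cases i <;> simp [KMsub]
  have hT : ∀ j : Fin 3, (∑ i, a j i • X i : MvPolynomial (Fin 8) K) ∈ R := by
    intro j
    refine ⟨X (Fin.natAdd 5 j), ?_⟩
    fin_cases j <;> simp [KMsub]
  have hl : ∀ j : Fin 3, (∑ k : Fin 3, a j (Fin.natAdd 5 k) • X (Fin.natAdd 5 k) :
      MvPolynomial (Fin 8) K) ∈ R := by
    intro j
    have h1 := hT j
    rw [Fin.sum_univ_add (a := 5) (b := 3)] at h1
    have h2 : (∑ i : Fin 5, a j (Fin.castAdd 3 i) • X (Fin.castAdd 3 i) :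
      MvPolynomial (Fin 8) K) ∈ R := R.sum_mem fun i _ => R.smul_mem (hlow i) _
    simpa using R.sub_mem h1 h2
  have hhigh : ∀ k : Fin 3, X (Fin.natAdd 5 k) ∈ R := by
    intro k
    set M : Matrix (Fin 3) (Fin 3) K := Matrix.of fun j k : Fin 3 => a j (Fin.natAdd 5 k) with hM
    have hinv : M⁻¹ * M = 1 := Matrix.nonsing_inv_mul _ (isUnit_iff_ne_zero.2 hdet)
    have : (X (Fin.natAdd 5 k) : MvPolynomial (Fin 8) K) =
        ∑ j, M⁻¹ k j • ∑ l : Fin 3, a j (Fin.natAdd 5 l) • X (Fin.natAdd 5 l) := by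
      simp only [Finset.smul_sum, smul_smul]
      rw [Finset.sum_comm]
      simp only [← Finset.sum_smul]
      have h3 : ∀ l, ∑ j, M⁻¹ k j * a j (Fin.natAdd 5 l) = (1 : Matrix (Fin 3) (Fin 3) K) k l := by
        intro l
        rw [← hinv, Matrix.mul_apply]; rfl
      simp only [h3, Matrix.one_apply, ite_smul, one_smul, zero_smul]
      simp
    rw [this]
    exact R.sum_mem fun j _ => R.smul_mem (hl j) _
  rintro _ ⟨i, rfl⟩
  refine Fin.addCases (m := 5) (n := 3) (motive := fun i => X i ∈ R) hlow hhigh i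

lemma KM_CM (K : Type*) [Field K] (θ' : Fin 3 → KMAlgebra K) (hθ : ∀ j, θ' j ∈ KMGrading K 1)
    (hfin : Module.Finite K (KMAlgebra K ⧸ Ideal.span (Set.range θ'))) :
    RingTheory.Sequence.IsRegular (KMAlgebra K) (List.ofFn θ') := by
  have h1 : ∀ j, ∃ a : Fin 8 → K, Ideal.Quotient.mk (KMIdeal K) (∑ i, a i • X i) = θ' j := by
    intro j
    obtain ⟨T, hT, hTj⟩ := hθ j
    rw [homogeneousSubmodule_one_eq_span_X] at hT
    obtain ⟨a, rfl⟩ := (Submodule.mem_span_range_iff_exists_fun K).1 hT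
    exact ⟨a, hTj⟩
  choose a ha using h1
  obtain rfl : (fun j => Ideal.Quotient.mk (KMIdeal K) (∑ i, a j i • X i)) = θ' := funext ha
  have hs := KM_sub_surj a (KM_det a hfin)
  set T : Fin 3 → MvPolynomial (Fin 8) K := fun j => ∑ i, a j i • X i with hT
  let φ : KMAlgebra K →+* KMAlgebra K :=
    Ideal.quotientMap (KMIdeal K) (KMsub T).toRingHom (KM_sub_le T)
  have hφs : Function.Surjective φ := Ideal.quotientMap_surjective hs
  let e : KMAlgebra K ≃+* KMAlgebra K := RingEquiv.ofBijective φ ⟨KM_surj_inj φ hφs, hφs⟩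
  have he : ∀ j, e (KMTheta K j) = Ideal.Quotient.mk (KMIdeal K) (T j) := by
    intro j
    have : KMTheta K j = Ideal.Quotient.mk (KMIdeal K) (X (Fin.natAdd 5 j)) := by
      fin_cases j <;> rfl
    rw [this]
    have hea : ∀ x, e x = φ x := fun x => rfl
    rw [hea]
    have hph : ∀ f, φ (Ideal.Quotient.mk (KMIdeal K) f) = Ideal.Quotient.mk (KMIdeal K) (KMsub T f) :=
      fun f => rfl
    rw [hph]
    congr 1
    fin_cases j <;> simp [KMsub]
  refine (AddEquiv.isRegular_congr (e := e.toAddEquiv) ?_).1 (KM_theta_reg K)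
  rw [List.forall₂_iff_get]
  refine ⟨by simp, fun i h1 h2 x => ?_⟩
  simp only [List.get_eq_getElem, List.getElem_ofFn, smul_eq_mul]
  rw [← he]
  exact map_mul e _ _


/-- **Remark 2.4, Kubitzke–Murai.**
Let `K` be a field of characteristic `0` and
`A = K[x₁,…,x₈]/((x₁²,x₁x₂,x₁x₃,x₁x₄,x₁x₅)+(x₂,x₃,x₄,x₅)³)`.  Then `A` is a Cohen-Macaulay
standard graded `K`-algebra of Krull dimension `3` (Cohen-Macaulayness being expressed by the
statement that every linear system of parameters is a regular sequence), its `h`-polynomial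
is `h_A(t) = 1 + 5t + 10t²`, the sequence `Θ = x₆,x₇,x₈` is an l.s.o.p. for `A`, and for
every `r ≥ 3` the algebra `A_Θ^⟨r⟩` does not have the weak Lefschetz property: there is no
linear form `w` (represented by an element of `A_r = (A^⟨r⟩)₁`) such that multiplication by
`w` from the degree-`i` to the degree-`(i+1)` component of `A_Θ^⟨r⟩` is injective or
surjective for every `i`. -/
theorem KM_not_weak_Lefschetz (K : Type*) [Field K] [CharZero K] :
    ringKrullDim (KMAlgebra K) = 3 ∧
    (∀ θ' : Fin 3 → KMAlgebra K, (∀ j, θ' j ∈ KMGrading K 1) →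
      Module.Finite K (KMAlgebra K ⧸ Ideal.span (Set.range θ')) →
      RingTheory.Sequence.IsRegular (KMAlgebra K) (List.ofFn θ')) ∧
    ((1 + 5 * Polynomial.X + 10 * Polynomial.X ^ 2 : Polynomial ℤ) : PowerSeries ℤ) =
      (PowerSeries.mk fun i => (Module.finrank K (KMGrading K i) : ℤ)) *
        (1 - PowerSeries.X) ^ 3 ∧
    (∀ j, KMTheta K j ∈ KMGrading K 1) ∧
    Module.Finite K (KMAlgebra K ⧸ Ideal.span (Set.range (KMTheta K))) ∧
    ∀ r : ℕ, 3 ≤ r →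
      ¬ ∃ w ∈ KMGrading K r, ∀ i : ℕ,
        (∀ x ∈ KMGrading K (i * r),
          w * x ∈ KMLsopIdealComponent K r (i + 1) → x ∈ KMLsopIdealComponent K r i) ∨
        (∀ y ∈ KMGrading K ((i + 1) * r), ∃ x ∈ KMGrading K (i * r),
          y - w * x ∈ KMLsopIdealComponent K r (i + 1)) := by
  refine ⟨KM_dim K, KM_CM K, KM_hilb K, KM_theta_mem K, KM_theta_fin K, ?_⟩
  rintro r hr ⟨w, hw, h⟩
  rcases h 1 with h1 | h1
  · exact KM_not_inj K r hr w hw h1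
  · exact KM_not_surj K r hr w h1
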